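/- Let H ∈ (1/2, 1), set α_H = H(2H-1), and let a ∈ [0,2). For t > 0 and 𝐭 = (t₁,…,t_n) ∈ [0,t]ⁿ, let t_{(1)} ≤ ⋯ ≤ t_{(n)} be the nondecreasing rearrangement of t₁,…,t_n, set t_{(n+1)} = t, and define β(𝐭) = ∏_{j=1}^{n} (t_{(j+1)} - t_{(j)}). Then there exists a constant c > 0 (depending only on H and a) such that for every integer n ≥ 1 and every t > 0, α_Hⁿ · ∫_{[0,t]^{2n}} ∏_{j=1}^{n} |t_j - s_j|^{2H-2} · (β(𝐭)·β(𝐬))^{-a/4} d𝐭 d𝐬 ≤ cⁿ · (n!)^{a/2} · t^{(4H-a)n/2}. -/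

import Mathlib

open MeasureTheory
open scoped Nat

/-- For `v = (v₁,…,v_n) ∈ [0,t]ⁿ`, `gapProd t v = ∏_{j=1}^{n} (v_{(j+1)} - v_{(j)})`, where
`v_{(1)} ≤ ⋯ ≤ v_{(n)}` is the nondecreasing rearrangement of `v` and `v_{(n+1)} = t`. -/
noncomputable def gapProd {n : ℕ} (t : ℝ) (v : Fin n → ℝ) : ℝ :=
  let w : Fin (n + 1) → ℝ := Fin.snoc (v ∘ Tuple.sort v) t
  ∏ j : Fin n, (w j.succ - w j.castSucc)

/-! By Schur's test (AM-GM on the two factors `β^{-a/4}`), the symmetric kernel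
`∏_j |t_j-s_j|^{2H-2}` contributes only the bound `(2 t^{2H-1} / (2H-1))ⁿ` on its marginals, and
what remains is `∫ β^{-a/2}` over the cube `[0,t]ⁿ`. By symmetry this is at most `n!` times the
integral over the simplex `0 ≤ t₁ ≤ ⋯ ≤ t_n ≤ t`. With `s = 1 - a/2`, the latter is Dirichlet's
integral `Γ(s)ⁿ t^{ns} / Γ(ns+1)`, a product of Beta integrals obtained by integrating out the
largest coordinate. The bound `y^y e^{-y} ≤ Γ(y+1)` gives `(n!)^s ≤ (e/s)^{ns} Γ(ns+1)`, so that
`n! / Γ(ns+1)` is at most `(n!)^{1-s} = (n!)^{a/2}` up to a geometric factor. -/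

open scoped ENNReal

theorem lintegral_pi_fin_prod {n : ℕ} {E : Fin n → Type*} [∀ i, MeasurableSpace (E i)]
    (μ : ∀ i, Measure (E i)) [∀ i, SigmaFinite (μ i)]
    {f : ∀ i, E i → ℝ≥0∞} (hf : ∀ i, Measurable (f i)) :
    ∫⁻ v, ∏ i, f i (v i) ∂Measure.pi μ = ∏ i, ∫⁻ x, f i x ∂μ i := by
  induction n with
  | zero => simp
  | succ n ih =>
    have hf_tail : Measurable fun u : ∀ i : Fin n, E i.succ => ∏ i, f i.succ (u i) := by fun_prop
    calc ∫⁻ v, ∏ i, f i (v i) ∂Measure.pi μ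
        = ∫⁻ z, f 0 z.1 * ∏ i : Fin n, f i.succ (z.2 i)
            ∂(μ 0).prod (Measure.pi fun i => μ i.succ) := by
          refine (lintegral_congr fun v => Fin.prod_univ_succ _).trans ?_
          exact (measurePreserving_piFinSuccAbove μ 0).lintegral_comp_emb
            (MeasurableEquiv.measurableEmbedding _)
            fun z : E 0 × (∀ i : Fin n, E i.succ) => f 0 z.1 * ∏ i, f i.succ (z.2 i)
      _ = ∏ i, ∫⁻ x, f i x ∂μ i := by
          rw [lintegral_prod_mul (hf 0).aemeasurable hf_tail.aemeasurable,
            ih _ fun i => hf i.succ, Fin.prod_univ_succ]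

theorem lintegral_pi_le_factorial_mul_setLIntegral_monotone {α : Type*} [LinearOrder α]
    [MeasurableSpace α] (μ : Measure α) [SigmaFinite μ] {n : ℕ} {f : (Fin n → α) → ℝ≥0∞}
    (hf : ∀ v (σ : Equiv.Perm (Fin n)), f (v ∘ σ) = f v) :
    ∫⁻ v, f v ∂Measure.pi (fun _ => μ) ≤
      n ! * ∫⁻ v in {v | Monotone v}, f v ∂Measure.pi (fun _ => μ) := by
  have hcover : ⋃ σ : Equiv.Perm (Fin n), {v : Fin n → α | Monotone (v ∘ σ)} = Set.univ :=
    Set.iUnion_eq_univ_iff.2 fun v => ⟨Tuple.sort v, Tuple.monotone_sort v⟩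
  have hpiece (σ : Equiv.Perm (Fin n)) :
      ∫⁻ v in {v | Monotone (v ∘ σ)}, f v ∂Measure.pi (fun _ => μ) =
        ∫⁻ v in {v | Monotone v}, f v ∂Measure.pi (fun _ => μ) := by
    refine (lintegral_congr fun v => (hf v σ).symm).trans ?_
    exact (measurePreserving_arrowCongr' (fun _ => μ) (fun _ => μ) σ.symm (MeasurableEquiv.refl α)
      fun _ => MeasurePreserving.id _).setLIntegral_comp_preimage_emb
        (MeasurableEquiv.measurableEmbedding _) f {v | Monotone v}
  calc ∫⁻ v, f v ∂Measure.pi (fun _ => μ)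
      ≤ ∑' σ : Equiv.Perm (Fin n),
          ∫⁻ v in {v | Monotone (v ∘ σ)}, f v ∂Measure.pi (fun _ => μ) := by
        rw [← setLIntegral_univ, ← hcover]
        exact lintegral_iUnion_le _ _
    _ = n ! * ∫⁻ v in {v | Monotone v}, f v ∂Measure.pi (fun _ => μ) := by
        simp only [hpiece, tsum_fintype, Finset.sum_const, Finset.card_univ, Fintype.card_perm,
          Fintype.card_fin, nsmul_eq_mul]

theorem lintegral_symm_kernel_mul_le {α : Type*} [MeasurableSpace α] {μ : Measure α} [SFinite μ]
    {K : α → α → ℝ≥0∞} {f : α → ℝ≥0∞} {C : ℝ≥0∞} (hK : Measurable (Function.uncurry K))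
    (hK_symm : ∀ x y, K x y = K y x) (hf : Measurable f) (hC : ∀ᵐ x ∂μ, ∫⁻ y, K x y ∂μ ≤ C) :
    ∫⁻ z, K z.1 z.2 * (f z.1 * f z.2) ∂μ.prod μ ≤ C * ∫⁻ x, f x ^ 2 ∂μ := by
  have hK' : Measurable fun z : α × α => K z.1 z.2 := hK
  have hswap : ∫⁻ z, K z.1 z.2 * f z.2 ^ 2 ∂μ.prod μ = ∫⁻ z, K z.1 z.2 * f z.1 ^ 2 ∂μ.prod μ := by
    rw [← lintegral_prod_swap]
    exact lintegral_congr fun z => by rw [hK_symm z.1]; rfl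
  have hmarginal : ∫⁻ z, K z.1 z.2 * f z.1 ^ 2 ∂μ.prod μ ≤ C * ∫⁻ x, f x ^ 2 ∂μ := by
    rw [lintegral_prod _ (by fun_prop), ← lintegral_const_mul _ (by fun_prop)]
    refine lintegral_mono_ae (hC.mono fun x hx => ?_)
    exact (lintegral_mul_const (f x ^ 2) (hK.of_uncurry_left (x := x))).trans_le (by gcongr)
  have hamgm (b c : ℝ≥0∞) : 2 * (b * c) ≤ b ^ 2 + c ^ 2 := by
    wlog hbc : b ≤ c generalizing b c
    · rw [mul_comm b, add_comm]
      exact this c b (le_of_not_ge hbc)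
    obtain ⟨d, rfl⟩ := exists_add_of_le hbc
    calc 2 * (b * (b + d)) ≤ 2 * (b * (b + d)) + d ^ 2 := le_self_add
      _ = b ^ 2 + (b + d) ^ 2 := by ring
  refine (ENNReal.mul_le_mul_iff_right two_ne_zero ENNReal.ofNat_ne_top).1 ?_
  calc 2 * ∫⁻ z, K z.1 z.2 * (f z.1 * f z.2) ∂μ.prod μ
      = ∫⁻ z, K z.1 z.2 * (2 * (f z.1 * f z.2)) ∂μ.prod μ := by
        rw [← lintegral_const_mul _ (by fun_prop)]
        exact lintegral_congr fun z => mul_left_comm _ _ _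
    _ ≤ ∫⁻ z, (K z.1 z.2 * f z.1 ^ 2 + K z.1 z.2 * f z.2 ^ 2) ∂μ.prod μ :=
        lintegral_mono fun z => by rw [← mul_add]; gcongr; exact hamgm _ _
    _ = 2 * ∫⁻ z, K z.1 z.2 * f z.1 ^ 2 ∂μ.prod μ := by
        rw [lintegral_add_left (by fun_prop), hswap, two_mul]
    _ ≤ 2 * (C * ∫⁻ x, f x ^ 2 ∂μ) := by gcongr

theorem lintegral_Icc_abs_sub_rpow_le {p a b x : ℝ} (hp : -1 < p) (hx : x ∈ Set.Icc a b) :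
    ∫⁻ y in Set.Icc a b, ENNReal.ofReal (|x - y| ^ p) ≤
      ENNReal.ofReal (2 / (p + 1) * (b - a) ^ (p + 1)) := by
  set L := b - a
  have hL0 : 0 ≤ L := sub_nonneg.2 (hx.1.trans hx.2)
  have hp' : 0 < p + 1 := by linarith
  have hhalf : ∫⁻ u in Set.Icc 0 L, ENNReal.ofReal (|u| ^ p) =
      ENNReal.ofReal (L ^ (p + 1) / (p + 1)) := by
    have hint : IntegrableOn (fun u : ℝ => u ^ p) (Set.Ioc 0 L) :=
      (intervalIntegrable_iff_integrableOn_Ioc_of_le hL0).1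
        (intervalIntegral.intervalIntegrable_rpow' hp)
    rw [setLIntegral_congr Ioc_ae_eq_Icc.symm,
      setLIntegral_congr_fun measurableSet_Ioc fun u hu => by rw [abs_of_pos hu.1],
      ← ofReal_integral_eq_lintegral_ofReal hint
        (ae_restrict_of_forall_mem measurableSet_Ioc fun u hu => Real.rpow_nonneg hu.1.le p),
      ← intervalIntegral.integral_of_le hL0, integral_rpow (.inl hp), Real.zero_rpow hp'.ne',
      sub_zero]
  have hmeas : Measurable fun u : ℝ => ENNReal.ofReal (|u| ^ p) := by fun_prop
  have hcover : Set.Icc a b ⊆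
      (fun y => x - y) ⁻¹' Set.Icc 0 L ∪ (fun y => y - x) ⁻¹' Set.Icc 0 L := by
    intro y hy
    rcases le_total y x with hyx | hxy
    · exact .inl ⟨by linarith, by linarith [hx.2, hy.1]⟩
    · exact .inr ⟨by linarith, by linarith [hx.1, hy.2]⟩
  calc ∫⁻ y in Set.Icc a b, ENNReal.ofReal (|x - y| ^ p)
      ≤ (∫⁻ y in (fun y => x - y) ⁻¹' Set.Icc 0 L, ENNReal.ofReal (|x - y| ^ p)) +
          ∫⁻ y in (fun y => y - x) ⁻¹' Set.Icc 0 L, ENNReal.ofReal (|x - y| ^ p) :=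
        (lintegral_mono_set hcover).trans (lintegral_union_le _ _ _)
    _ = ENNReal.ofReal (L ^ (p + 1) / (p + 1)) + ENNReal.ofReal (L ^ (p + 1) / (p + 1)) := by
        rw [(Measure.measurePreserving_sub_left volume x).setLIntegral_comp_preimage
          measurableSet_Icc hmeas]
        simp_rw [abs_sub_comm x]
        rw [(measurePreserving_sub_right volume x).setLIntegral_comp_preimage
          measurableSet_Icc hmeas, hhalf]
    _ = ENNReal.ofReal (2 / (p + 1) * L ^ (p + 1)) := by
        rw [← ENNReal.ofReal_add (by positivity) (by positivity)]
        ring_nf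

theorem lintegral_Ioo_sub_rpow_mul_rpow {a b t : ℝ} (ha : 0 < a) (hb : 0 < b) (ht : 0 < t) :
    ∫⁻ x in Set.Ioo 0 t, ENNReal.ofReal ((t - x) ^ (a - 1) * x ^ (b - 1)) =
      ENNReal.ofReal (ProbabilityTheory.beta b a * t ^ (a + b - 1)) := by
  have hbeta := ProbabilityTheory.beta_pos hb ha
  have himage : (fun y => t * y) '' Set.Ioo 0 1 = Set.Ioo 0 t := by
    simp [Set.image_mul_left_Ioo ht]
  have hscale (y : ℝ) (hy : y ∈ Set.Ioo 0 1) :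
      ENNReal.ofReal |t| * ENNReal.ofReal ((t - t * y) ^ (a - 1) * (t * y) ^ (b - 1)) =
        ENNReal.ofReal (ProbabilityTheory.beta b a * t ^ (a + b - 1)) *
          ENNReal.ofReal (1 / ProbabilityTheory.beta b a * y ^ (b - 1) * (1 - y) ^ (a - 1)) := by
    have hy' : 0 ≤ 1 - y := by linarith [hy.2]
    rw [← ENNReal.ofReal_mul (by positivity), ← ENNReal.ofReal_mul (by positivity),
      abs_of_pos ht, show t - t * y = t * (1 - y) by ring, Real.mul_rpow ht.le hy',
      Real.mul_rpow ht.le hy.1.le, show a + b - 1 = 1 + (a - 1) + (b - 1) by ring,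
      Real.rpow_add ht, Real.rpow_add ht, Real.rpow_one]
    field_simp
  rw [← himage, lintegral_image_eq_lintegral_abs_deriv_mul measurableSet_Ioo
      (fun y _ => (hasDerivAt_const_mul t).hasDerivWithinAt) (mul_right_injective₀ ht.ne').injOn,
    setLIntegral_congr_fun measurableSet_Ioo hscale,
    lintegral_const_mul' _ _ ENNReal.ofReal_ne_top, ← ProbabilityTheory.lintegral_betaPDF,
    ProbabilityTheory.lintegral_betaPDF_eq_one hb ha, mul_one]

theorem rpow_self_mul_exp_neg_le_Gamma_add_one {y : ℝ} (hy : 0 ≤ y) :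
    y ^ y * Real.exp (-y) ≤ Real.Gamma (y + 1) := by
  have hint : IntegrableOn (fun x : ℝ => Real.exp (-x) * x ^ y) (Set.Ioi 0) := by
    simpa using Real.GammaIntegral_convergent (s := y + 1) (by positivity)
  have hsub : Set.Ioi y ⊆ Set.Ioi 0 := Set.Ioi_subset_Ioi hy
  calc y ^ y * Real.exp (-y) = ∫ x in Set.Ioi y, Real.exp (-x) * y ^ y := by
        rw [integral_mul_const, integral_exp_neg_Ioi, mul_comm]
    _ ≤ ∫ x in Set.Ioi y, Real.exp (-x) * x ^ y := by
        refine setIntegral_mono_on ((integrableOn_exp_neg_Ioi y).mul_const _) (hint.mono_set hsub)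
          measurableSet_Ioi fun x hx => ?_
        gcongr
        exact hx.le
    _ ≤ ∫ x in Set.Ioi 0, Real.exp (-x) * x ^ y :=
        setIntegral_mono_set hint (ae_restrict_of_forall_mem measurableSet_Ioi fun x hx =>
          mul_nonneg (Real.exp_nonneg _) (Real.rpow_nonneg (Set.mem_Ioi.1 hx).le y))
          hsub.eventuallyLE
    _ = Real.Gamma (y + 1) := by
        rw [Real.Gamma_eq_integral (by positivity), add_sub_cancel_right]

theorem factorial_rpow_le_pow_mul_Gamma {s : ℝ} (hs : 0 < s) (n : ℕ) :
    (n ! : ℝ) ^ s ≤ ((Real.exp 1 / s) ^ s) ^ n * Real.Gamma (n * s + 1) := by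
  calc (n ! : ℝ) ^ s ≤ ((n : ℝ) ^ n) ^ s := by
        gcongr
        exact_mod_cast Nat.factorial_le_pow n
    _ = (n : ℝ) ^ (n * s) := by rw [← Real.rpow_natCast, ← Real.rpow_mul n.cast_nonneg]
    _ = ((Real.exp 1 / s) ^ s) ^ n * ((n * s) ^ (n * s) * Real.exp (-(n * s))) := by
        rw [← Real.rpow_mul_natCast (by positivity), mul_comm s,
          Real.div_rpow (Real.exp_nonneg _) hs.le, Real.mul_rpow n.cast_nonneg hs.le,
          Real.exp_one_rpow, Real.exp_neg]
        field_simp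
    _ ≤ ((Real.exp 1 / s) ^ s) ^ n * Real.Gamma (n * s + 1) := by
        gcongr
        exact rpow_self_mul_exp_neg_le_Gamma_add_one (by positivity)

theorem gapProd_comp_perm {n : ℕ} (t : ℝ) (v : Fin n → ℝ) (σ : Equiv.Perm (Fin n)) :
    gapProd t (v ∘ σ) = gapProd t v := by
  unfold gapProd
  rw [Tuple.comp_perm_comp_sort_eq_comp_sort]

theorem gapProd_of_monotone {n : ℕ} {t : ℝ} {v : Fin n → ℝ} (hv : Monotone v) :
    gapProd t v = ∏ j : Fin n,
      ((Fin.snoc v t : Fin (n + 1) → ℝ) j.succ - (Fin.snoc v t : Fin (n + 1) → ℝ) j.castSucc) := by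
  unfold gapProd
  rw [Tuple.sort_eq_refl_iff_monotone.2 hv, Equiv.coe_refl, Function.comp_id]

theorem monotone_snoc_iff {α : Type*} [Preorder α] {n : ℕ} {u : Fin n → α} {x : α} :
    Monotone (Fin.snoc u x : Fin (n + 1) → α) ↔ Monotone u ∧ ∀ i, u i ≤ x := by
  refine ⟨fun h => ⟨fun i j hij => ?_, fun i => ?_⟩, fun ⟨hu, hx⟩ i j hij => ?_⟩
  · simpa using h (Fin.castSucc_le_castSucc_iff.2 hij)
  · simpa using h (Fin.le_last i.castSucc)
  · induction j using Fin.lastCases <;> induction i using Fin.lastCases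
    · rfl
    · simpa using hx _
    · exact absurd hij (Fin.castSucc_lt_last _).not_ge
    · simpa using hu (Fin.castSucc_le_castSucc_iff.1 hij)

theorem gapProd_nonneg {n : ℕ} {t : ℝ} {v : Fin n → ℝ} (hv : ∀ i, v i ≤ t) :
    0 ≤ gapProd t v := by
  have hmono : Monotone (Fin.snoc (v ∘ Tuple.sort v) t : Fin (n + 1) → ℝ) :=
    monotone_snoc_iff.2 ⟨Tuple.monotone_sort v, fun _ => hv _⟩
  exact Finset.prod_nonneg fun j _ => sub_nonneg.2 (hmono j.castSucc_le_succ)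

theorem gapProd_snoc {n : ℕ} (t : ℝ) {u : Fin n → ℝ} {x : ℝ}
    (hux : Monotone (Fin.snoc u x : Fin (n + 1) → ℝ)) :
    gapProd t (Fin.snoc u x : Fin (n + 1) → ℝ) = (t - x) * gapProd x u := by
  rw [gapProd_of_monotone hux, gapProd_of_monotone (monotone_snoc_iff.1 hux).1,
    Fin.prod_univ_castSucc, mul_comm]
  simp only [Fin.succ_last, Fin.snoc_last, Fin.succ_castSucc, Fin.snoc_castSucc]

theorem continuous_gapProd {n : ℕ} (t : ℝ) : Continuous (gapProd t : (Fin n → ℝ) → ℝ) := by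
  refine (locallyFinite_of_finite fun σ : Equiv.Perm (Fin n) =>
    {v : Fin n → ℝ | Monotone (v ∘ σ)}).continuous ?_ ?_ ?_
  · exact Set.iUnion_eq_univ_iff.2 fun v => ⟨Tuple.sort v, Tuple.monotone_sort v⟩
  · exact fun σ => isClosed_monotone.preimage (by fun_prop)
  · intro σ
    refine ContinuousOn.congr (f := fun v => ∏ j : Fin n,
      ((Fin.snoc (v ∘ σ) t : Fin (n + 1) → ℝ) j.succ -
        (Fin.snoc (v ∘ σ) t : Fin (n + 1) → ℝ) j.castSucc)) ?_ fun v hv => ?_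
    · fun_prop
    · rw [← gapProd_comp_perm t v σ, gapProd_of_monotone hv]

/-- The simplex `0 ≤ v₁ ≤ ⋯ ≤ v_n ≤ t`: the part of the cube `[0,t]ⁿ` on which `gapProd t` is the
product of the successive gaps, without any sorting. -/
def orderedSimplex (n : ℕ) (t : ℝ) : Set (Fin n → ℝ) :=
  {v ∈ Set.Icc 0 (fun _ => t) | Monotone v}

theorem measurableSet_orderedSimplex (n : ℕ) (t : ℝ) : MeasurableSet (orderedSimplex n t) :=
  (isClosed_Icc.inter isClosed_monotone).measurableSet

theorem snoc_mem_orderedSimplex_iff {n : ℕ} {t x : ℝ} {u : Fin n → ℝ} :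
    (Fin.snoc u x : Fin (n + 1) → ℝ) ∈ orderedSimplex (n + 1) t ↔
      x ∈ Set.Icc 0 t ∧ u ∈ orderedSimplex n x := by
  simp only [orderedSimplex, Set.mem_ofPred_eq, Set.mem_Icc, Pi.le_def, Fin.forall_fin_succ',
    Fin.snoc_castSucc, Fin.snoc_last, Pi.zero_apply, monotone_snoc_iff]
  grind

theorem setLIntegral_orderedSimplex_succ {n : ℕ} (t : ℝ) {f : (Fin (n + 1) → ℝ) → ℝ≥0∞}
    (hf : Measurable f) :
    ∫⁻ v in orderedSimplex (n + 1) t, f v =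
      ∫⁻ x in Set.Icc 0 t, ∫⁻ u in orderedSimplex n x, f (Fin.snoc u x) := by
  let F := (orderedSimplex (n + 1) t).indicator f
  have hF : Measurable F := hf.indicator (measurableSet_orderedSimplex _ _)
  have hsnoc := (volume_preserving_piFinSuccAbove (fun _ : Fin (n + 1) => ℝ) (Fin.last n)).symm
  have hsnoc_apply (z : ℝ × (Fin n → ℝ)) :
      (MeasurableEquiv.piFinSuccAbove (fun _ => ℝ) (Fin.last n)).symm z = Fin.snoc z.2 z.1 :=
    Fin.insertNth_last' z.1 z.2
  calc ∫⁻ v in orderedSimplex (n + 1) t, f v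
      = ∫⁻ z : ℝ × (Fin n → ℝ), F (Fin.snoc z.2 z.1) := by
        rw [← lintegral_indicator (measurableSet_orderedSimplex _ _), ← hsnoc.lintegral_comp hF]
        simp only [hsnoc_apply, F]
    _ = ∫⁻ x, ∫⁻ u : Fin n → ℝ, F (Fin.snoc u x) := by
        refine lintegral_prod _ (Measurable.aemeasurable ?_)
        simpa only [Function.comp_def, hsnoc_apply] using hF.comp hsnoc.measurable
    _ = ∫⁻ x in Set.Icc 0 t, ∫⁻ u in orderedSimplex n x, f (Fin.snoc u x) := by
        rw [← lintegral_indicator measurableSet_Icc]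
        refine lintegral_congr fun x => ?_
        by_cases hx : x ∈ Set.Icc 0 t
        · rw [Set.indicator_of_mem hx, ← lintegral_indicator (measurableSet_orderedSimplex _ _)]
          refine lintegral_congr fun u => ?_
          by_cases hu : u ∈ orderedSimplex n x
          · rw [Set.indicator_of_mem hu]
            exact Set.indicator_of_mem (snoc_mem_orderedSimplex_iff.2 ⟨hx, hu⟩) f
          · rw [Set.indicator_of_notMem hu]
            exact Set.indicator_of_notMem (fun h => hu (snoc_mem_orderedSimplex_iff.1 h).2) f
        · rw [Set.indicator_of_notMem hx]
          exact lintegral_eq_zero_of_ae_eq_zero <| .of_forall fun u =>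
            Set.indicator_of_notMem (fun h => hx (snoc_mem_orderedSimplex_iff.1 h).1) f

theorem setLIntegral_orderedSimplex_gapProd_snoc_rpow {n : ℕ} {t x : ℝ} (hxt : x ≤ t) (r : ℝ) :
    ∫⁻ u in orderedSimplex n x,
        ENNReal.ofReal (gapProd t (Fin.snoc u x : Fin (n + 1) → ℝ) ^ r) =
      ENNReal.ofReal ((t - x) ^ r) *
        ∫⁻ u in orderedSimplex n x, ENNReal.ofReal (gapProd x u ^ r) := by
  have hxt' : 0 ≤ t - x := sub_nonneg.2 hxt
  rw [← lintegral_const_mul' _ _ ENNReal.ofReal_ne_top]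
  refine setLIntegral_congr_fun (measurableSet_orderedSimplex n x) fun u hu => ?_
  rw [gapProd_snoc t (monotone_snoc_iff.2 ⟨hu.2, hu.1.2⟩),
    Real.mul_rpow hxt' (gapProd_nonneg hu.1.2), ENNReal.ofReal_mul (by positivity)]

theorem setLIntegral_orderedSimplex_gapProd_rpow {s t : ℝ} (hs : 0 < s) (ht : 0 < t) (n : ℕ) :
    ∫⁻ v in orderedSimplex n t, ENNReal.ofReal (gapProd t v ^ (s - 1)) =
      ENNReal.ofReal (Real.Gamma s ^ n / Real.Gamma (n * s + 1) * t ^ (n * s)) := by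
  induction n generalizing t with
  | zero =>
    have huniv : orderedSimplex 0 t = Set.univ :=
      Set.eq_univ_of_forall fun v => ⟨⟨fun i => i.elim0, fun i => i.elim0⟩, fun i => i.elim0⟩
    simp [huniv, gapProd, volume_pi]
  | succ n ih =>
    set A : ℝ := Real.Gamma s ^ n / Real.Gamma (n * s + 1) with hA
    have hA0 : 0 ≤ A := by positivity
    have hinner (x : ℝ) (hx : x ∈ Set.Ioo 0 t) :
        ∫⁻ u in orderedSimplex n x,
            ENNReal.ofReal (gapProd t (Fin.snoc u x : Fin (n + 1) → ℝ) ^ (s - 1)) =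
          ENNReal.ofReal A * ENNReal.ofReal ((t - x) ^ (s - 1) * x ^ (n * s + 1 - 1)) := by
      have hxt : 0 ≤ t - x := sub_nonneg.2 hx.2.le
      rw [setLIntegral_orderedSimplex_gapProd_snoc_rpow hx.2.le, ih hx.1, add_sub_cancel_right,
        ENNReal.ofReal_mul hA0, ENNReal.ofReal_mul (by positivity), mul_left_comm]
    have hgap := (continuous_gapProd (n := n + 1) t).measurable
    rw [setLIntegral_orderedSimplex_succ t (by fun_prop), setLIntegral_congr Ioo_ae_eq_Icc.symm,
      setLIntegral_congr_fun measurableSet_Ioo hinner,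
      lintegral_const_mul' _ _ ENNReal.ofReal_ne_top,
      lintegral_Ioo_sub_rpow_mul_rpow hs (by positivity) ht, ← ENNReal.ofReal_mul hA0,
      ProbabilityTheory.beta, hA, show n * s + 1 + s = (n + 1 : ℕ) * s + 1 by push_cast; ring,
      show s + (n * s + 1) - 1 = (n + 1 : ℕ) * s by push_cast; ring]
    congr 1
    field_simp
    rw [pow_succ]

theorem volume_restrict_Icc_pi_const {ι : Type*} [Fintype ι] (t : ℝ) :
    (volume : Measure (ι → ℝ)).restrict (Set.Icc 0 fun _ => t) =
      Measure.pi fun _ => volume.restrict (Set.Icc 0 t) := by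
  rw [volume_pi, ← Measure.restrict_pi_pi, ← Set.pi_univ_Icc]
  rfl

theorem setLIntegral_Icc_gapProd_rpow_le {s t : ℝ} (hs : 0 < s) (ht : 0 < t) (n : ℕ) :
    ∫⁻ v in Set.Icc (0 : Fin n → ℝ) (fun _ => t), ENNReal.ofReal (gapProd t v ^ (s - 1)) ≤
      ENNReal.ofReal
        ((Real.Gamma s * (Real.exp 1 / s) ^ s) ^ n * (n ! : ℝ) ^ (1 - s) * t ^ (n * s)) := by
  have hΓn : 0 < Real.Gamma (n * s + 1) := Real.Gamma_pos_of_pos (by positivity)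
  calc ∫⁻ v in Set.Icc (0 : Fin n → ℝ) (fun _ => t), ENNReal.ofReal (gapProd t v ^ (s - 1))
      ≤ n ! * ∫⁻ v in orderedSimplex n t, ENNReal.ofReal (gapProd t v ^ (s - 1)) := by
        rw [volume_restrict_Icc_pi_const]
        refine (lintegral_pi_le_factorial_mul_setLIntegral_monotone _ fun v σ => ?_).trans_eq ?_
        · rw [gapProd_comp_perm]
        · rw [← volume_restrict_Icc_pi_const,
            Measure.restrict_restrict isClosed_monotone.measurableSet, Set.inter_comm]
          rfl
    _ = ENNReal.ofReal
          (n ! * (Real.Gamma s ^ n / Real.Gamma (n * s + 1) * t ^ (n * s))) := by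
        rw [setLIntegral_orderedSimplex_gapProd_rpow hs ht, ← ENNReal.ofReal_natCast,
          ← ENNReal.ofReal_mul (by positivity)]
    _ ≤ _ := by
        refine ENNReal.ofReal_le_ofReal ?_
        have hn : (0 : ℝ) < n ! := by positivity
        calc _ = (n ! : ℝ) ^ s / Real.Gamma (n * s + 1) *
              (Real.Gamma s ^ n * (n ! : ℝ) ^ (1 - s) * t ^ (n * s)) := by
              rw [Real.rpow_sub hn, Real.rpow_one]
              field_simp
          _ ≤ ((Real.exp 1 / s) ^ s) ^ n *
              (Real.Gamma s ^ n * (n ! : ℝ) ^ (1 - s) * t ^ (n * s)) := by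
              gcongr
              rw [div_le_iff₀ hΓn]
              exact factorial_rpow_le_pow_mul_Gamma hs n
          _ = _ := by rw [mul_pow]; ring

theorem lintegral_Icc_prod_abs_sub_rpow_le {n : ℕ} {p t : ℝ} (hp : -1 < p) {x : Fin n → ℝ}
    (hx : x ∈ Set.Icc (0 : Fin n → ℝ) (fun _ => t)) :
    ∫⁻ y in Set.Icc (0 : Fin n → ℝ) (fun _ => t), ENNReal.ofReal (∏ j, |x j - y j| ^ p) ≤
      ENNReal.ofReal (2 / (p + 1) * t ^ (p + 1)) ^ n := by
  simp_rw [ENNReal.ofReal_prod_of_nonneg fun j _ => Real.rpow_nonneg (abs_nonneg (x j - _)) p]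
  rw [volume_restrict_Icc_pi_const,
    lintegral_pi_fin_prod _ (f := fun j y => ENNReal.ofReal (|x j - y| ^ p)) fun j => by fun_prop]
  calc _ ≤ ∏ _j : Fin n, ENNReal.ofReal (2 / (p + 1) * (t - 0) ^ (p + 1)) :=
        Finset.prod_le_prod' fun j _ => lintegral_Icc_abs_sub_rpow_le hp ⟨hx.1 j, hx.2 j⟩
    _ = _ := by rw [Finset.prod_const, Finset.card_fin, sub_zero]

theorem lintegral_prod_abs_sub_rpow_mul_gapProd_rpow_le {n : ℕ} {p q t : ℝ} (hp : -1 < p) :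
    ∫⁻ z in (Set.Icc (0 : Fin n → ℝ) (fun _ => t)) ×ˢ (Set.Icc (0 : Fin n → ℝ) (fun _ => t)),
        ENNReal.ofReal ((∏ j, |z.1 j - z.2 j| ^ p) * (gapProd t z.1 * gapProd t z.2) ^ q) ≤
      ENNReal.ofReal (2 / (p + 1) * t ^ (p + 1)) ^ n *
        ∫⁻ v in Set.Icc (0 : Fin n → ℝ) (fun _ => t), ENNReal.ofReal (gapProd t v ^ (2 * q)) := by
  set S : Set (Fin n → ℝ) := Set.Icc 0 (fun _ => t)
  have hS : MeasurableSet S := measurableSet_Icc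
  have hgap : ∀ v ∈ S, 0 ≤ gapProd t v := fun v hv => gapProd_nonneg hv.2
  let K (x y : Fin n → ℝ) : ℝ≥0∞ := ENNReal.ofReal (∏ j, |x j - y j| ^ p)
  let f (v : Fin n → ℝ) : ℝ≥0∞ := ENNReal.ofReal (gapProd t v ^ q)
  calc _ = ∫⁻ z, K z.1 z.2 * (f z.1 * f z.2) ∂(volume.restrict S).prod (volume.restrict S) := by
        rw [Measure.prod_restrict, ← Measure.volume_eq_prod]
        refine setLIntegral_congr_fun (hS.prod hS) fun z hz => ?_
        have h1 := hgap _ hz.1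
        have h2 := hgap _ hz.2
        simp only [K, f]
        rw [Real.mul_rpow h1 h2, ENNReal.ofReal_mul (by positivity),
          ENNReal.ofReal_mul (by positivity)]
    _ ≤ ENNReal.ofReal (2 / (p + 1) * t ^ (p + 1)) ^ n * ∫⁻ v in S, f v ^ 2 := by
        have hgap_meas := (continuous_gapProd (n := n) t).measurable
        refine lintegral_symm_kernel_mul_le ?_ (fun x y => ?_) (by fun_prop) ?_
        · simp only [K, Function.uncurry_def]; fun_prop
        · simp only [K, abs_sub_comm]
        · exact ae_restrict_of_forall_mem hS fun x hx => lintegral_Icc_prod_abs_sub_rpow_le hp hx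
    _ = _ := by
        congr 1
        refine setLIntegral_congr_fun hS fun v hv => ?_
        have h := hgap v hv
        simp only [f]
        rw [← ENNReal.ofReal_pow (by positivity), ← Real.rpow_mul_natCast h, mul_comm q,
          Nat.cast_ofNat]

theorem stmt_14_general (H : ℝ) (hH : 1 / 2 < H) (a : ℝ) (ha : a < 2) :
    ∃ c : ℝ, 0 < c ∧ ∀ n : ℕ, ∀ t : ℝ, 0 < t →
      ENNReal.ofReal (H * (2 * H - 1)) ^ n *
        ∫⁻ p in (Set.Icc (0 : Fin n → ℝ) (fun _ => t)) ×ˢ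
            (Set.Icc (0 : Fin n → ℝ) (fun _ => t)),
          ENNReal.ofReal ((∏ j : Fin n, |p.1 j - p.2 j| ^ (2 * H - 2)) *
            (gapProd t p.1 * gapProd t p.2) ^ (-(a / 4))) ≤
      ENNReal.ofReal (c ^ n * (n ! : ℝ) ^ (a / 2) * t ^ ((4 * H - a) * n / 2)) := by
  have hH' : 0 < 2 * H - 1 := by linarith
  obtain ⟨s, hs, rfl⟩ : ∃ s, 0 < s ∧ a = 2 * (1 - s) := ⟨1 - a / 2, by linarith, by ring⟩
  refine ⟨2 * H * (Real.Gamma s * (Real.exp 1 / s) ^ s), by positivity, fun n t ht => ?_⟩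
  have hkernel := lintegral_prod_abs_sub_rpow_mul_gapProd_rpow_le (n := n) (t := t)
    (p := 2 * H - 2) (q := -(2 * (1 - s) / 4)) (by linarith)
  rw [show 2 * -(2 * (1 - s) / 4) = s - 1 by ring,
    show 2 * H - 2 + 1 = 2 * H - 1 by ring] at hkernel
  refine (mul_le_mul_right (hkernel.trans
    (mul_le_mul_right (setLIntegral_Icc_gapProd_rpow_le hs ht n) _)) _).trans_eq ?_
  rw [← mul_assoc, ← mul_pow, ← ENNReal.ofReal_mul (by positivity),
    ← ENNReal.ofReal_pow (by positivity), ← ENNReal.ofReal_mul (by positivity)]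
  have hconst : H * (2 * H - 1) * (2 / (2 * H - 1) * t ^ (2 * H - 1)) =
      2 * H * t ^ (2 * H - 1) := by
    linear_combination 2 * H * t ^ (2 * H - 1) * mul_inv_cancel₀ hH'.ne'
  have hexp : (t ^ (2 * H - 1)) ^ n * t ^ (n * s) = t ^ ((4 * H - 2 * (1 - s)) * n / 2) := by
    rw [← Real.rpow_mul_natCast ht.le, ← Real.rpow_add ht]
    ring_nf
  rw [hconst, ← hexp, mul_div_cancel_left₀ _ two_ne_zero]
  ring_nf

/-- For `H ∈ (1/2,1)`, `α_H = H(2H-1)` and `a ∈ [0,2)`, there is `c > 0` (depending only on `H`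
and `a`) such that for all `n ≥ 1` and `t > 0`,
`α_Hⁿ ∫_{[0,t]^{2n}} ∏_j |t_j-s_j|^{2H-2} (β(𝐭)β(𝐬))^{-a/4} d𝐭 d𝐬
  ≤ cⁿ (n!)^{a/2} t^{(4H-a)n/2}`. -/
theorem stmt_14 (H : ℝ) (hH : H ∈ Set.Ioo (1 / 2 : ℝ) 1) (a : ℝ) (ha : a ∈ Set.Ico (0 : ℝ) 2) :
    ∃ c : ℝ, 0 < c ∧ ∀ n : ℕ, 1 ≤ n → ∀ t : ℝ, 0 < t →
      ENNReal.ofReal (H * (2 * H - 1)) ^ n *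
        ∫⁻ p in (Set.Icc (0 : Fin n → ℝ) (fun _ => t)) ×ˢ
            (Set.Icc (0 : Fin n → ℝ) (fun _ => t)),
          ENNReal.ofReal ((∏ j : Fin n, |p.1 j - p.2 j| ^ (2 * H - 2)) *
            (gapProd t p.1 * gapProd t p.2) ^ (-(a / 4))) ≤
      ENNReal.ofReal (c ^ n * (n ! : ℝ) ^ (a / 2) * t ^ ((4 * H - a) * n / 2)) := by
  obtain ⟨c, hc, hbound⟩ := stmt_14_general H hH.1 a ha.2
  exact ⟨c, hc, fun n _ => hbound n⟩
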